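/- For the flat torus of modulus τ with basis sections s_j(z) = θ_{j/k,0}(kz + φ, kτ), j = 1,…,k, the L^2 Gram matrix with weight h_0^k(z) = exp(πik(z-z̄)^2/(τ-τ̄) + 2πi(z-z̄)(φ-φ̄)/(τ-τ̄)) and flat metric of area 2π is diagonal: ⟨s_j, s_l⟩ = √(i/(k(τ-τ̄))) · exp(-(πi/k)(φ-φ̄)^2/(τ-τ̄)) · δ_{jl}. -/

import Mathlib

open Complex ComplexConjugate

/-- The theta function with characteristics:
`θ_{a,b}(z,τ) = ∑_{n∈ℤ} exp(πi(n+a)²τ + 2πi(n+a)(z+b))`. -/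
noncomputable def thetaChar (a b : ℝ) (z τ : ℂ) : ℂ :=
  ∑' n : ℤ, Complex.exp (Real.pi * I * ((n : ℂ) + a) ^ 2 * τ +
    2 * Real.pi * I * ((n : ℂ) + a) * (z + b))

lemma thetaChar_term_eq (a b : ℝ) (z τ : ℂ) (n : ℤ) :
    cexp (Real.pi * I * ((n : ℂ) + a) ^ 2 * τ + 2 * Real.pi * I * ((n : ℂ) + a) * (z + b)) =
      cexp (Real.pi * I * a ^ 2 * τ + 2 * Real.pi * I * a * (z + b)) *
        jacobiTheta₂_term n (z + b + a * τ) τ := by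
  rw [jacobiTheta₂_term, ← Complex.exp_add]
  congr 1
  ring

lemma summable_norm_thetaChar_term (a b : ℝ) (z : ℂ) {τ : ℂ} (hτ : 0 < τ.im) :
    Summable fun n : ℤ ↦ ‖cexp (Real.pi * I * ((n : ℂ) + a) ^ 2 * τ +
      2 * Real.pi * I * ((n : ℂ) + a) * (z + b))‖ := by
  simp_rw [thetaChar_term_eq]
  exact (((summable_jacobiTheta₂_term_iff _ τ).mpr hτ).mul_left _).norm

lemma continuous_thetaChar (a b : ℝ) {τ : ℂ} (hτ : 0 < τ.im) :
    Continuous fun z ↦ thetaChar a b z τ := by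
  have h : Continuous fun z ↦ jacobiTheta₂ z τ :=
    continuous_iff_continuousAt.mpr fun z ↦ (differentiableAt_jacobiTheta₂_fst z hτ).continuousAt
  simp_rw [thetaChar, thetaChar_term_eq, tsum_mul_left]
  change Continuous fun z ↦ _ * jacobiTheta₂ (z + b + a * τ) τ
  fun_prop

lemma integral_cexp_two_pi_int (N : ℤ) :
    ∫ x in (0 : ℝ)..1, cexp (2 * Real.pi * I * N * x) = if N = 0 then 1 else 0 := by
  split_ifs with h
  · simp [h]
  · have hc : 2 * (Real.pi : ℂ) * I * N ≠ 0 :=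
      mul_ne_zero Complex.two_pi_I_ne_zero (Int.cast_ne_zero.mpr h)
    rw [integral_exp_mul_complex hc]
    have : cexp (2 * Real.pi * I * N) = 1 := by
      rw [mul_comm]
      exact Complex.exp_int_mul_two_pi_mul_I N
    simp [this]

/-- Termwise integration of a product of two absolutely convergent trigonometric series. -/
lemma integral_conj_tsum_mul_tsum {ι : Type*} [Countable ι] {c d : ι → ℂ}
    (hc : Summable fun n ↦ ‖c n‖) (hd : Summable fun n ↦ ‖d n‖) (P Q : ι → ℤ) :
    ∫ x in (0 : ℝ)..1, conj (∑' m, c m * cexp (2 * Real.pi * I * P m * x)) *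
        ∑' n, d n * cexp (2 * Real.pi * I * Q n * x) =
      ∑' p : ι × ι, if P p.1 = Q p.2 then conj (c p.1) * d p.2 else 0 := by
  have hnorm (N : ℤ) (x : ℝ) : ‖cexp (2 * Real.pi * I * N * x)‖ = 1 := by
    rw [show 2 * (Real.pi : ℂ) * I * N * x = ((2 * Real.pi * N * x : ℝ) : ℂ) * I by
      push_cast; ring, Complex.norm_exp_ofReal_mul_I]
  have hprod (x : ℝ) : conj (∑' m, c m * cexp (2 * Real.pi * I * P m * x)) *
        ∑' n, d n * cexp (2 * Real.pi * I * Q n * x) =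
      ∑' p : ι × ι, conj (c p.1) * d p.2 *
        cexp (2 * Real.pi * I * (Q p.2 - P p.1 : ℤ) * x) := by
    rw [Complex.conj_tsum, tsum_mul_tsum_of_summable_norm (by simpa [hnorm] using hc)
      (by simpa [hnorm] using hd)]
    refine tsum_congr fun p ↦ ?_
    have : conj (cexp (2 * Real.pi * I * P p.1 * x)) =
        cexp (-(2 * Real.pi * I * P p.1 * x)) := by
      rw [← Complex.exp_conj]
      simp [Complex.conj_ofNat]
    rw [map_mul, this, mul_mul_mul_comm, ← Complex.exp_add]
    congr 2
    push_cast
    ring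
  simp_rw [hprod, intervalIntegral.integral_of_le zero_le_one]
  have hcd : Summable fun p : ι × ι ↦ ‖conj (c p.1) * d p.2‖ :=
    Summable.mul_norm (f := fun m ↦ conj (c m)) (by simpa using hc) hd
  rw [← (MeasureTheory.hasSum_integral_of_summable_integral_norm (fun p ↦ ?_) ?_).tsum_eq]
  · refine tsum_congr fun p ↦ ?_
    rw [← intervalIntegral.integral_of_le zero_le_one, intervalIntegral.integral_const_mul,
      integral_cexp_two_pi_int]
    simp [sub_eq_zero, eq_comm]
  · simpa only [norm_mul, hnorm, mul_one, MeasureTheory.integral_const,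
      MeasureTheory.measureReal_def, MeasureTheory.Measure.restrict_apply_univ,
      Real.volume_Ioc, sub_zero, ENNReal.ofReal_one,
      ENNReal.toReal_one, one_smul] using hcd
  · exact (Continuous.integrableOn_Icc (by fun_prop)).mono_set Set.Ioc_subset_Icc_self

/-- Unfolding the integral over `ℝ` of a function along integer translates. -/
lemma intervalIntegral_tsum_comp_add_int {f : ℝ → ℂ} (hf : MeasureTheory.Integrable f) :
    ∫ y in (0 : ℝ)..1, ∑' n : ℤ, f (y + n) = ∫ u, f u := by
  rw [← hf.hasSum_intervalIntegral_comp_add_int.tsum_eq]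
  simp_rw [intervalIntegral.integral_of_le zero_le_one]
  refine (MeasureTheory.hasSum_integral_of_summable_integral_norm (fun n ↦ ?_) ?_).tsum_eq.symm
  · exact (hf.comp_add_right (n : ℝ)).integrableOn
  · simpa only [intervalIntegral.integral_of_le zero_le_one] using
      hf.norm.hasSum_intervalIntegral_comp_add_int.summable

lemma sub_conj_ne_zero {τ : ℂ} (hτ : 0 < τ.im) : τ - conj τ ≠ 0 := by
  rw [Complex.sub_conj]
  simp [hτ.ne']

/-- The Gaussian integral to which the squared norm of a section unfolds. -/
lemma integral_cexp_torus_gaussian {k : ℕ} (hk : 0 < k) {τ : ℂ} (hτ : 0 < τ.im) (φ : ℂ) :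
    MeasureTheory.Integrable (fun u : ℝ ↦ cexp (Real.pi * I * k * (τ - conj τ) * u ^ 2 +
        2 * Real.pi * I * (φ - conj φ) * u + 0)) ∧
      ∫ u : ℝ, cexp (Real.pi * I * k * (τ - conj τ) * u ^ 2 +
        2 * Real.pi * I * (φ - conj φ) * u + 0) =
      (I / (k * (τ - conj τ))) ^ ((1 : ℂ) / 2) *
        cexp (-(Real.pi * I / k) * (φ - conj φ) ^ 2 / (τ - conj τ)) := by
  have hre : (Real.pi * I * k * (τ - conj τ)).re < 0 := by
    have : Real.pi * I * k * (τ - conj τ) = ((-(2 * Real.pi * k * τ.im) : ℝ) : ℂ) := by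
      rw [Complex.sub_conj]
      push_cast
      linear_combination 2 * Real.pi * k * τ.im * I_mul_I
    rw [this, Complex.ofReal_re, neg_lt_zero]
    positivity
  refine ⟨integrable_cexp_quadratic' hre _ _, ?_⟩
  rw [integral_cexp_quadratic hre]
  have hk' : (k : ℂ) ≠ 0 := by exact_mod_cast hk.ne'
  have hπ : (Real.pi : ℂ) ≠ 0 := by exact_mod_cast Real.pi_ne_zero
  have hτ' := sub_conj_ne_zero hτ
  congr 2
  · field_simp
    simp
  · field_simp
    simp
    ring

/-- Expansion of a section in Fourier modes along the real period. -/
lemma thetaChar_section_eq_tsum {k : ℕ} (hk : 0 < k) (τ φ : ℂ) (j : ℕ) (x y : ℝ) :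
    thetaChar (((j : ℕ) + 1 : ℝ) / k) 0 (k * ((x : ℂ) + y * τ) + φ) (k * τ) =
      ∑' n : ℤ, cexp (Real.pi * I * ((n : ℂ) + ((j + 1 : ℝ) / k : ℝ)) ^ 2 * (k * τ) +
          2 * Real.pi * I * ((n : ℂ) + ((j + 1 : ℝ) / k : ℝ)) * (k * (y * τ) + φ + (0 : ℝ))) *
        cexp (2 * Real.pi * I * (k * n + (j + 1) : ℤ) * x) := by
  have hk' : (k : ℂ) ≠ 0 := by exact_mod_cast hk.ne'
  refine tsum_congr fun n ↦ ?_
  rw [← Complex.exp_add]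
  congr 1
  push_cast
  field_simp
  ring

lemma fourier_mode_eq_iff {k : ℕ} (j l : Fin k) (m n : ℤ) :
    (k * m + (j + 1) : ℤ) = k * n + (l + 1) ↔ m = n ∧ j = l := by
  refine ⟨fun h ↦ ?_, by rintro ⟨rfl, rfl⟩; rfl⟩
  have hj := j.isLt
  have hl := l.isLt
  have hmn : m = n := by
    by_contra hne
    rcases lt_or_gt_of_ne hne with hlt | hlt <;> nlinarith
  subst hmn
  exact ⟨rfl, Fin.ext (by omega)⟩

/-- The product of a Fourier coefficient with its conjugate and the weight is a Gaussian. -/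
lemma conj_mul_mul_weight_eq (k : ℕ) {τ : ℂ} (hτ : 0 < τ.im) (φ : ℂ) (a x y : ℝ) (n : ℤ) :
    conj (cexp (Real.pi * I * ((n : ℂ) + a) ^ 2 * (k * τ) +
        2 * Real.pi * I * ((n : ℂ) + a) * (k * (y * τ) + φ + (0 : ℝ)))) *
      cexp (Real.pi * I * ((n : ℂ) + a) ^ 2 * (k * τ) +
        2 * Real.pi * I * ((n : ℂ) + a) * (k * (y * τ) + φ + (0 : ℝ))) *
      cexp (Real.pi * I * k * (((x : ℂ) + y * τ) - ((x : ℂ) + y * conj τ)) ^ 2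
          / (τ - conj τ) +
        2 * Real.pi * I * (((x : ℂ) + y * τ) - ((x : ℂ) + y * conj τ)) * (φ - conj φ)
          / (τ - conj τ)) =
    cexp (Real.pi * I * k * (τ - conj τ) * (y + n + a : ℝ) ^ 2 +
      2 * Real.pi * I * (φ - conj φ) * (y + n + a : ℝ) + 0) := by
  have hτ' := sub_conj_ne_zero hτ
  rw [← Complex.exp_conj, ← Complex.exp_add, ← Complex.exp_add]
  congr 1
  simp only [map_add, map_mul, map_pow, conj_I, conj_ofReal, map_intCast, map_natCast,
    Complex.conj_ofNat]
  push_cast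
  field_simp
  ring

/-- On the flat torus of modulus `τ` (area `2π`), the sections
`s_j(z) = θ_{j/k,0}(kz + φ, kτ)`, `j = 1,…,k`, are orthogonal with respect to the
weight `h_0^k(z) = exp(πik(z-z̄)²/(τ-τ̄) + 2πi(z-z̄)(φ-φ̄)/(τ-τ̄))`:
`⟨s_j, s_l⟩ = √(i/(k(τ-τ̄))) · exp(-(πi/k)(φ-φ̄)²/(τ-τ̄)) · δ_{jl}`.
The integral over the fundamental domain `z = x + yτ`, `(x,y) ∈ [0,1]²`, with
the flat metric of total area `2π`, normalizes so that
`⟨s_j,s_l⟩ = ∫_{[0,1]²} conj(s_j(z)) s_l(z) h_0^k(z) dx dy`. -/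
theorem torus_gram_diagonal (k : ℕ) (hk : 0 < k) (τ φ : ℂ) (hτ : 0 < τ.im)
    (j l : Fin k) :
    (∫ x in (0:ℝ)..1, ∫ y in (0:ℝ)..1,
      conj (thetaChar (((j : ℕ) + 1 : ℝ) / k) 0 (k * ((x : ℂ) + y * τ) + φ) (k * τ)) *
        thetaChar (((l : ℕ) + 1 : ℝ) / k) 0 (k * ((x : ℂ) + y * τ) + φ) (k * τ) *
        Complex.exp (Real.pi * I * k * (((x : ℂ) + y * τ) - ((x : ℂ) + y * conj τ)) ^ 2
            / (τ - conj τ) +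
          2 * Real.pi * I * (((x : ℂ) + y * τ) - ((x : ℂ) + y * conj τ)) * (φ - conj φ)
            / (τ - conj τ)))
    = (I / (k * (τ - conj τ))) ^ ((1 : ℂ) / 2) *
        Complex.exp (-(Real.pi * I / k) * (φ - conj φ) ^ 2 / (τ - conj τ)) *
        (if j = l then 1 else 0) := by
  have hkτ : 0 < ((k : ℂ) * τ).im := by
    rw [← Complex.ofReal_natCast, Complex.im_ofReal_mul]
    positivity
  rw [MeasureTheory.intervalIntegral_intervalIntegral_swap]
  swap
  · have hθ (a : ℝ) := continuous_thetaChar a 0 hkτ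
    refine (Continuous.continuousOn ?_).integrableOn_compact
      (isCompact_uIcc.prod isCompact_uIcc) |>.mono_set
      (Set.prod_mono Set.uIoc_subset_uIcc Set.uIoc_subset_uIcc)
    refine ((continuous_conj.comp ((hθ _).comp ?_)).mul ((hθ _).comp ?_)).mul ?_ <;> fun_prop
  have hfiber (y : ℝ) : (∫ x in (0:ℝ)..1,
      conj (thetaChar (((j : ℕ) + 1 : ℝ) / k) 0 (k * ((x : ℂ) + y * τ) + φ) (k * τ)) *
        thetaChar (((l : ℕ) + 1 : ℝ) / k) 0 (k * ((x : ℂ) + y * τ) + φ) (k * τ) *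
        Complex.exp (Real.pi * I * k * (((x : ℂ) + y * τ) - ((x : ℂ) + y * conj τ)) ^ 2
            / (τ - conj τ) +
          2 * Real.pi * I * (((x : ℂ) + y * τ) - ((x : ℂ) + y * conj τ)) * (φ - conj φ)
            / (τ - conj τ))) =
      (∑' n : ℤ, cexp (Real.pi * I * k * (τ - conj τ) * (y + n + (j + 1 : ℝ) / k : ℝ) ^ 2 +
        2 * Real.pi * I * (φ - conj φ) * (y + n + (j + 1 : ℝ) / k : ℝ) + 0)) *
        (if j = l then 1 else 0) := by
    have hs (i : ℕ) := summable_norm_thetaChar_term ((i + 1 : ℝ) / k) 0 (k * (y * τ) + φ) hkτ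
    simp_rw [← conj_mul_mul_weight_eq k hτ φ _ 0 y, tsum_mul_right, add_sub_add_left_eq_sub,
      intervalIntegral.integral_mul_const, thetaChar_section_eq_tsum hk]
    rw [integral_conj_tsum_mul_tsum (hs j) (hs l)]
    conv_rhs => rw [mul_right_comm]
    congr 1
    simp_rw [fourier_mode_eq_iff]
    rcases eq_or_ne j l with rfl | hjl
    · simp only [and_true, if_true, mul_one]
      rw [Summable.tsum_prod]
      · simp
      · refine Summable.of_norm_bounded ((hs j).mul_norm (hs j)) fun p ↦ ?_
        split_ifs
        · simp only [norm_mul, RCLike.norm_conj, le_refl]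
        · rw [norm_zero]
          exact norm_nonneg _
    · simp [hjl]
  simp_rw [hfiber, intervalIntegral.integral_mul_const]
  obtain ⟨hint, hval⟩ := integral_cexp_torus_gaussian hk hτ φ
  rw [← hval, intervalIntegral_tsum_comp_add_int
    (hint.comp_add_right ((j + 1 : ℝ) / k)), MeasureTheory.integral_add_right_eq_self
    (fun u : ℝ ↦ cexp (Real.pi * I * k * (τ - conj τ) * u ^ 2 +
        2 * Real.pi * I * (φ - conj φ) * u + 0))]
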